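/- arXiv:1703.10283 — 2 statements merged into one kernel-verified Lean document; each statement's English description precedes it below -/
import Mathlib

section
/- Let g : ℝ → (0,∞) be a strictly positive probability density and let X and Y be stochastic processes on [0,1] with continuous sample paths (not necessarily on the same probability space). Define d(P_X, P_Y) = Σ_{k=1}^∞ (e^{-1}/k!) ∫_{[0,1]^k} ∫_{ℝ^k} |φ_X(x_k; s_k) − φ_Y(x_k; s_k)|² ∏_{j=1}^k g(s_j) ds_k dx_k. Then d(P_X, P_Y) = 0 if and only if X and Y have the same law on C([0,1],ℝ), i.e., all finite-dimensional distributions of X and Y coincide. -/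
open MeasureTheory
open scoped unitInterval ENNReal

/-- The characteristic function of the finite-dimensional distribution of the process `X`
at the points `x 0, …, x (k-1)` of `[0,1]`: `φ_X(x; s) = E[exp(i Σ_j s_j X(x_j))]`. -/
noncomputable def margCF {Ω : Type*} [MeasurableSpace Ω] (ℙ : Measure Ω)
    (X : Ω → C(I, ℝ)) {k : ℕ} (x : Fin k → I) (s : Fin k → ℝ) : ℂ :=
  ∫ ω, Complex.exp (Complex.I * ((∑ j, s j * X ω (x j) : ℝ) : ℂ)) ∂ℙ

/-- The distance between the laws of the processes `X` and `Y`: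
`d(P_X,P_Y) = Σ_{k≥1} (e^{-1}/k!) ∫_{[0,1]^k} ∫_{ℝ^k} |φ_X(x;s) - φ_Y(x;s)|² Π_j g(s_j) ds dx`. -/
noncomputable def distLaw {Ω : Type*} [MeasurableSpace Ω] (ℙ : Measure Ω)
    {Ω' : Type*} [MeasurableSpace Ω'] (ℙ' : Measure Ω')
    (X : Ω → C(I, ℝ)) (Y : Ω' → C(I, ℝ)) (g : ℝ → ℝ) : ℝ≥0∞ :=
  ∑' k : ℕ,
    ENNReal.ofReal (Real.exp (-1) / (Nat.factorial (k + 1) : ℝ)) *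
      ∫⁻ (x : Fin (k + 1) → I),
        ∫⁻ (s : Fin (k + 1) → ℝ),
          ENNReal.ofReal
            (‖margCF ℙ X x s - margCF ℙ' Y x s‖ ^ 2 * ∏ j, g (s j))

/-!
The characters `f ↦ exp (i ∑ s_j f (x_j))` span a star-subalgebra of bounded continuous functions
separating the points of the Polish space `C([0,1], ℝ)`, so their integrals determine a finite
Borel measure there. If the distance vanishes, then for each `k ≥ 1` the nonnegative integrand does
so almost everywhere; since `φ_X - φ_Y` is jointly continuous in `(x, s)` by dominated convergence
and the reference measure charges every nonempty open set, `φ_X = φ_Y` everywhere. The absent term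
`k = 0` is recovered from `k = 1` at frequency zero.
-/

theorem isOpenPosMeasure_comap_subtypeVal {α : Type*} [TopologicalSpace α] [MeasurableSpace α]
    (μ : Measure α) [μ.IsOpenPosMeasure] {s : Set α} (hs : MeasurableSet s)
    (hs_interior : s ⊆ closure (interior s)) :
    (μ.comap ((↑) : s → α)).IsOpenPosMeasure where
  open_pos U hU hU_nonempty := by
    obtain ⟨V, hV, rfl⟩ := isOpen_induced_iff.1 hU
    obtain ⟨x, hxV⟩ := hU_nonempty
    have hV_interior : (V ∩ interior s).Nonempty :=
      mem_closure_iff.1 (hs_interior x.2) V hV hxV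
    rw [comap_subtype_coe_apply hs, Subtype.image_preimage_coe, Set.inter_comm]
    exact ((hV.inter isOpen_interior).measure_pos μ hV_interior |>.trans_le
      (measure_mono (Set.inter_subset_inter_right V interior_subset))).ne'

instance isOpenPosMeasure_volume_unitInterval : (volume : Measure I).IsOpenPosMeasure :=
  isOpenPosMeasure_comap_subtypeVal volume measurableSet_Icc
    (closure_interior_Icc (zero_ne_one' ℝ)).ge

theorem eq_zero_of_lintegral_lintegral_norm_pow_mul_eq_zero
    {α β E : Type*} [TopologicalSpace α] [MeasurableSpace α] [OpensMeasurableSpace α]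
    [TopologicalSpace β] [MeasurableSpace β] [OpensMeasurableSpace β]
    [SecondCountableTopologyEither α β] [NormedAddCommGroup E]
    {μ : Measure α} [μ.IsOpenPosMeasure] [SFinite μ]
    {ν : Measure β} [ν.IsOpenPosMeasure] [SFinite ν]
    {F : α × β → E} (hF : Continuous F) {w : β → ℝ} (hw : AEMeasurable w ν)
    (hw_pos : ∀ᵐ b ∂ν, 0 < w b) (p : ℕ)
    (h : ∫⁻ a, ∫⁻ b, ENNReal.ofReal (‖F (a, b)‖ ^ p * w b) ∂ν ∂μ = 0) :
    F = 0 := by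
  have h_meas : AEMeasurable (fun z ↦ ENNReal.ofReal (‖F z‖ ^ p * w z.2)) (μ.prod ν) :=
    ((hF.norm.pow p).measurable.aemeasurable.mul hw.comp_snd).ennreal_ofReal
  have h_ae : ∀ᵐ z ∂μ.prod ν, ENNReal.ofReal (‖F z‖ ^ p * w z.2) = 0 := by
    rwa [← lintegral_prod _ h_meas, lintegral_eq_zero_iff' h_meas] at h
  refine (hF.ae_eq_iff_eq (μ.prod ν) continuous_const).1 ?_
  filter_upwards [h_ae, Measure.quasiMeasurePreserving_snd.ae hw_pos] with z hz hwz
  have h_pow : ‖F z‖ ^ p ≤ 0 := nonpos_of_mul_nonpos_left (ENNReal.ofReal_eq_zero.1 hz) hwz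
  exact norm_eq_zero.1 (eq_zero_of_pow_eq_zero (h_pow.antisymm (by positivity)))

section FiniteDimensionalCharFun

variable {T : Type*} [TopologicalSpace T] [CompactSpace T]
  [SecondCountableTopology C(T, ℝ)] [MeasurableSpace C(T, ℝ)] [BorelSpace C(T, ℝ)]
  {μ ν : Measure C(T, ℝ)} [IsFiniteMeasure μ] [IsFiniteMeasure ν]

theorem measure_ext_of_integral_exp_finsupp_sum_eq
    (h : ∀ w : T →₀ ℝ,
      ∫ f, Complex.exp (Complex.I * ((w.sum fun t c ↦ c * f t : ℝ) : ℂ)) ∂μ =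
        ∫ f, Complex.exp (Complex.I * ((w.sum fun t c ↦ c * f t : ℝ) : ℂ)) ∂ν) :
    μ = ν := by
  let L : C(T, ℝ) →ₗ[ℝ] (T →₀ ℝ) →ₗ[ℝ] ℝ :=
    Finsupp.bilinearCombination ℝ ℝ ∘ₗ ContinuousMap.coeFnLinearMap ℝ
  have hL_apply (f : C(T, ℝ)) (w : T →₀ ℝ) : L f w = w.sum fun t c ↦ c * f t := rfl
  -- The discrete topology reduces joint continuity of the pairing to continuity in `f`.
  let _ : TopologicalSpace (T →₀ ℝ) := ⊥
  have : DiscreteTopology (T →₀ ℝ) := ⟨rfl⟩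
  have hL_cont : Continuous fun p : C(T, ℝ) × (T →₀ ℝ) ↦ L p.1 p.2 := by
    refine continuous_prod_of_discrete_right.2 fun w ↦ ?_
    simp only [hL_apply, Finsupp.sum]
    fun_prop
  have hL_ne (f : C(T, ℝ)) (hf : f ≠ 0) : L f ≠ 0 := by
    obtain ⟨t, ht⟩ := DFunLike.ne_iff.1 hf
    refine DFunLike.ne_iff.2 ⟨Finsupp.single t 1, ?_⟩
    simpa [hL_apply] using ht
  refine ext_of_integral_char_eq Real.continuous_probChar Real.probChar_ne_one hL_ne hL_cont
    fun w ↦ ?_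
  simpa only [BoundedContinuousFunction.char_apply, Real.probChar_apply, hL_apply,
    mul_comm Complex.I] using h w

theorem measure_ext_of_integral_exp_sum_eq
    (h : ∀ (k : ℕ) (x : Fin k → T) (s : Fin k → ℝ),
      ∫ f, Complex.exp (Complex.I * ((∑ j, s j * f (x j) : ℝ) : ℂ)) ∂μ =
        ∫ f, Complex.exp (Complex.I * ((∑ j, s j * f (x j) : ℝ) : ℂ)) ∂ν) :
    μ = ν := by
  refine measure_ext_of_integral_exp_finsupp_sum_eq fun w ↦ ?_
  let e := w.support.equivFin.symm
  have h_sum (f : C(T, ℝ)) : w.sum (fun t c ↦ c * f t) = ∑ j, w (e j) * f (e j) := by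
    rw [Finsupp.sum, ← Finset.sum_coe_sort, ← e.sum_comp]
  simpa only [h_sum] using h _ (fun j ↦ e j) (fun j ↦ w (e j))

end FiniteDimensionalCharFun

section MargCF

variable {Ω : Type*} [MeasurableSpace Ω] {ℙ : Measure Ω}
  {Ω' : Type*} [MeasurableSpace Ω'] {ℙ' : Measure Ω'}
  {X : Ω → C(I, ℝ)} {Y : Ω' → C(I, ℝ)}

theorem margCF_cons_zero {k : ℕ} (t : I) (x : Fin k → I) (s : Fin k → ℝ) :
    margCF ℙ X (Fin.cons t x : Fin (k + 1) → I) (Fin.cons 0 s) = margCF ℙ X x s := by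
  simp [margCF, Fin.sum_univ_succ]

variable [MeasurableSpace C(I, ℝ)] [BorelSpace C(I, ℝ)]

theorem margCF_map_id (hX : AEMeasurable X ℙ) {k : ℕ} (x : Fin k → I) (s : Fin k → ℝ) :
    margCF (ℙ.map X) id x s = margCF ℙ X x s := by
  refine integral_map hX (Continuous.aestronglyMeasurable ?_)
  simp only [id_eq]
  fun_prop

theorem continuous_margCF [IsFiniteMeasure ℙ] (hX : AEMeasurable X ℙ) (k : ℕ) :
    Continuous fun p : (Fin k → I) × (Fin k → ℝ) ↦ margCF ℙ X p.1 p.2 := by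
  refine continuous_of_dominated (bound := fun _ ↦ 1) (fun p ↦ ?_) (fun p ↦ ?_)
    (integrable_const 1) (.of_forall fun ω ↦ by fun_prop)
  · have h_cont : Continuous fun f : C(I, ℝ) ↦
        Complex.exp (Complex.I * ((∑ j, p.2 j * f (p.1 j) : ℝ) : ℂ)) := by fun_prop
    exact (h_cont.measurable.comp_aemeasurable hX).aestronglyMeasurable
  · exact .of_forall fun ω ↦ by rw [mul_comm, Complex.norm_exp_ofReal_mul_I]

theorem map_eq_map_iff_forall_margCF_eq [IsFiniteMeasure ℙ] [IsFiniteMeasure ℙ']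
    (hX : AEMeasurable X ℙ) (hY : AEMeasurable Y ℙ') :
    ℙ.map X = ℙ'.map Y ↔
      ∀ (k : ℕ) (x : Fin k → I) (s : Fin k → ℝ), margCF ℙ X x s = margCF ℙ' Y x s := by
  simp only [← margCF_map_id hX, ← margCF_map_id hY]
  exact ⟨fun h k x s ↦ by rw [h], measure_ext_of_integral_exp_sum_eq⟩

theorem distLaw_eq_zero_iff_forall_margCF_eq [IsFiniteMeasure ℙ] [IsFiniteMeasure ℙ']
    (hX : AEMeasurable X ℙ) (hY : AEMeasurable Y ℙ')
    {g : ℝ → ℝ} (hg : AEMeasurable g) (hg_pos : ∀ᵐ s, 0 < g s) :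
    distLaw ℙ ℙ' X Y g = 0 ↔
      ∀ (k : ℕ) (x : Fin (k + 1) → I) (s : Fin (k + 1) → ℝ),
        margCF ℙ X x s = margCF ℙ' Y x s := by
  refine ⟨fun h k ↦ ?_, fun h ↦ by simp [distLaw, h]⟩
  have h_coeff : ENNReal.ofReal (Real.exp (-1) / (Nat.factorial (k + 1) : ℝ)) ≠ 0 :=
    (ENNReal.ofReal_pos.2 (by positivity)).ne'
  have h_integral := (mul_eq_zero.1 (ENNReal.tsum_eq_zero.1 h k)).resolve_left h_coeff
  have h_eval (j : Fin (k + 1)) :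
      Measure.QuasiMeasurePreserving (Function.eval j) (volume : Measure (Fin (k + 1) → ℝ)) :=
    Measure.quasiMeasurePreserving_eval _ j
  have h_weight : AEMeasurable fun s : Fin (k + 1) → ℝ ↦ ∏ j, g (s j) :=
    Finset.aemeasurable_fun_prod _ fun j _ ↦ hg.comp_quasiMeasurePreserving (h_eval j)
  have h_weight_pos : ∀ᵐ s : Fin (k + 1) → ℝ, 0 < ∏ j, g (s j) := by
    filter_upwards [ae_all_iff.2 fun j ↦ (h_eval j).ae hg_pos] with s hs
    exact Finset.prod_pos fun j _ ↦ hs j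
  have : (volume : Measure (Fin (k + 1) → I)).IsOpenPosMeasure :=
    Measure.pi.isOpenPosMeasure _
  have h_diff := eq_zero_of_lintegral_lintegral_norm_pow_mul_eq_zero
    ((continuous_margCF hX (k + 1)).sub (continuous_margCF hY (k + 1)))
    h_weight h_weight_pos 2 h_integral
  exact fun x s ↦ sub_eq_zero.1 (congrFun h_diff (x, s))

theorem distLaw_eq_zero_iff_eq_law_general [IsFiniteMeasure ℙ] [IsFiniteMeasure ℙ']
    (hX : AEMeasurable X ℙ) (hY : AEMeasurable Y ℙ')
    {g : ℝ → ℝ} (hg : AEMeasurable g) (hg_pos : ∀ᵐ s, 0 < g s) :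
    distLaw ℙ ℙ' X Y g = 0 ↔ ℙ.map X = ℙ'.map Y := by
  rw [distLaw_eq_zero_iff_forall_margCF_eq hX hY hg hg_pos,
    map_eq_map_iff_forall_margCF_eq hX hY]
  refine ⟨fun h k x s ↦ ?_, fun h k ↦ h (k + 1)⟩
  rw [← margCF_cons_zero 0 x s, h, margCF_cons_zero]

end MargCF

/-- For a strictly positive probability density `g` on `ℝ` and two
processes `X, Y` with continuous sample paths on `[0,1]` (not necessarily on the same
probability space), `d(P_X,P_Y) = 0` iff `X` and `Y` have the same law on `C([0,1],ℝ)`. -/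
theorem distLaw_eq_zero_iff_eq_law
    {Ω : Type*} [MeasurableSpace Ω] (ℙ : Measure Ω) [IsProbabilityMeasure ℙ]
    {Ω' : Type*} [MeasurableSpace Ω'] (ℙ' : Measure Ω') [IsProbabilityMeasure ℙ']
    [MeasurableSpace C(I, ℝ)] [BorelSpace C(I, ℝ)]
    (X : Ω → C(I, ℝ)) (Y : Ω' → C(I, ℝ)) (hX : Measurable X) (hY : Measurable Y)
    (g : ℝ → ℝ) (hg : Measurable g) (hg_pos : ∀ s, 0 < g s)
    (hg_int : (∫ s, g s) = 1) :
    distLaw ℙ ℙ' X Y g = 0 ↔ Measure.map X ℙ = Measure.map Y ℙ' :=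
  distLaw_eq_zero_iff_eq_law_general hX.aemeasurable hY.aemeasurable hg.aemeasurable
    (.of_forall hg_pos)
end

section
/- Let g : ℝ → [0,∞) be a probability density and define ĝ : ℝ → ℂ by ĝ(u) = ∫_ℝ e^{isu} g(s) ds. Let (X',Y') be an independent copy of (X,Y), and let Y'', Y''' be independent copies of Y such that (X,Y), (X',Y'), Y'', Y''' are mutually independent. Then e · d_g(X,Y) = Re E[exp(∫_0^1 ĝ(X(x) − X'(x)) ĝ(Y(x) − Y'(x)) dx)] + Re E[exp(∫_0^1 ĝ(X(x) − X'(x)) ĝ(Y''(x) − Y'''(x)) dx)] − 2 Re E[exp(∫_0^1 ĝ(X(x) − X'(x)) ĝ(Y(x) − Y''(x)) dx)]. -/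
open MeasureTheory
open scoped unitInterval ENNReal

/-- The joint characteristic function of the finite-dimensional distribution of the pair
of processes `(X, Y)` at the points `x 0, …, x (k-1)` of `[0,1]`:
`φ_{X,Y}(x; s, t) = E[exp(i Σ_j (s_j X(x_j) + t_j Y(x_j)))]`. -/
noncomputable def jointCF {Ω : Type*} [MeasurableSpace Ω] (ℙ : Measure Ω)
    (X Y : Ω → C(I, ℝ)) {k : ℕ} (x : Fin k → I) (s t : Fin k → ℝ) : ℂ :=
  ∫ ω, Complex.exp (Complex.I * ((∑ j, (s j * X ω (x j) + t j * Y ω (x j)) : ℝ) : ℂ)) ∂ℙ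

/-- The distance covariance `d_g(X,Y)` of two stochastic processes `X, Y` with continuous
sample paths on `[0,1]`, with weight function `g`:
`d_g(X,Y) = Σ_{k≥1} (e^{-1}/k!) ∫_{[0,1]^k} ∫_{ℝ^{2k}} |φ_{X,Y} - φ_X φ_Y|² Π_j g(s_j)g(t_j) ds dt dx`. -/
noncomputable def distCov {Ω : Type*} [MeasurableSpace Ω] (ℙ : Measure Ω)
    (X Y : Ω → C(I, ℝ)) (g : ℝ → ℝ) : ℝ≥0∞ :=
  ∑' k : ℕ,
    ENNReal.ofReal (Real.exp (-1) / (Nat.factorial (k + 1) : ℝ)) *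
      ∫⁻ (x : Fin (k + 1) → I),
        ∫⁻ (s : Fin (k + 1) → ℝ), ∫⁻ (t : Fin (k + 1) → ℝ),
          ENNReal.ofReal
            (‖jointCF ℙ X Y x s t - margCF ℙ X x s * margCF ℙ Y x t‖ ^ 2 *
              ∏ j, g (s j) * g (t j))

/-!
The squared distance `‖φ_{X,Y} - φ_X φ_Y‖²` is the real part of a combination of characteristic
functions of differences of independent copies, because conjugating a characteristic function
negates the process. Integrating such a characteristic function over the `k` points and the
`2 k` frequencies, weighted by `g`, gives the expectation of a `k`-th power, since the sampling
triples `(xⱼ, sⱼ, tⱼ)` are independent and identically distributed given the processes. Dividing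
by `k!` and summing yields the exponentials; the term `k = 0`, absent from the distance
covariance, vanishes because all characteristic functions of no points equal `1`.
-/

section ProductMeasures

theorem lintegral_fin_prod_eq_prod {n : ℕ} {α : Fin n → Type*} [∀ i, MeasurableSpace (α i)]
    {μ : ∀ i, Measure (α i)} [∀ i, SigmaFinite (μ i)] {f : ∀ i, α i → ℝ≥0∞}
    (hf : ∀ i, Measurable (f i)) :
    ∫⁻ x, ∏ i, f i (x i) ∂Measure.pi μ = ∏ i, ∫⁻ x, f i x ∂μ i := by
  induction n with
  | zero => simp
  | succ n ih =>
    have measurable_prod : Measurable fun x : ∀ i : Fin n, α i.succ ↦ ∏ i, f i.succ (x i) :=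
      Finset.measurable_fun_prod _ fun i _ ↦ (hf i.succ).comp (measurable_pi_apply i)
    calc ∫⁻ x, ∏ i, f i (x i) ∂Measure.pi μ
      _ = ∫⁻ x : α 0 × ∀ i : Fin n, α i.succ, f 0 x.1 * ∏ i : Fin n, f i.succ (x.2 i)
          ∂(μ 0).prod (Measure.pi fun i ↦ μ i.succ) := by
        rw [← (measurePreserving_piFinSuccAbove μ 0).symm.lintegral_comp_emb
          (MeasurableEquiv.measurableEmbedding _)]
        simp_rw [Fin.prod_univ_succ]
        rfl
      _ = (∫⁻ x, f 0 x ∂μ 0) * ∏ i : Fin n, ∫⁻ x, f i.succ x ∂μ i.succ := by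
        rw [← ih fun i ↦ hf i.succ]
        exact lintegral_prod_mul (hf 0).aemeasurable measurable_prod.aemeasurable
      _ = ∏ i, ∫⁻ x, f i x ∂μ i := (Fin.prod_univ_succ fun i ↦ ∫⁻ x, f i x ∂μ i).symm

variable {ι : Type*} [Fintype ι]

theorem lintegral_fintype_prod_eq_prod {α : ι → Type*} [∀ i, MeasurableSpace (α i)]
    {μ : ∀ i, Measure (α i)} [∀ i, SigmaFinite (μ i)] {f : ∀ i, α i → ℝ≥0∞}
    (hf : ∀ i, Measurable (f i)) :
    ∫⁻ x, ∏ i, f i (x i) ∂Measure.pi μ = ∏ i, ∫⁻ x, f i x ∂μ i := by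
  let e := (Fintype.equivFin ι).symm
  rw [← (measurePreserving_piCongrLeft μ e).lintegral_comp_emb
    (MeasurableEquiv.measurableEmbedding _)]
  simp_rw [← e.prod_comp, MeasurableEquiv.coe_piCongrLeft, Equiv.piCongrLeft_apply_apply]
  exact lintegral_fin_prod_eq_prod fun i ↦ hf (e i)

theorem pi_withDensity {α : ι → Type*} [∀ i, MeasurableSpace (α i)]
    {μ : ∀ i, Measure (α i)} [∀ i, SigmaFinite (μ i)] {f : ∀ i, α i → ℝ≥0∞}
    [∀ i, SigmaFinite ((μ i).withDensity (f i))] (hf : ∀ i, Measurable (f i)) :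
    Measure.pi (fun i ↦ (μ i).withDensity (f i)) =
      (Measure.pi μ).withDensity fun x ↦ ∏ i, f i (x i) := by
  refine Measure.pi_eq fun s hs ↦ ?_
  simp_rw [withDensity_apply _ (MeasurableSet.univ_pi hs), withDensity_apply _ (hs _),
    Measure.restrict_pi_pi, lintegral_fintype_prod_eq_prod hf]

theorem lintegral_pi_prod {α β : Type*} [MeasurableSpace α] [MeasurableSpace β]
    {μ : ι → Measure α} [∀ i, SigmaFinite (μ i)] {ν : ι → Measure β} [∀ i, SigmaFinite (ν i)]
    {f : (ι → α × β) → ℝ≥0∞} (hf : Measurable f) :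
    ∫⁻ z, f z ∂Measure.pi (fun i ↦ (μ i).prod (ν i)) =
      ∫⁻ x, ∫⁻ y, f (fun i ↦ (x i, y i)) ∂Measure.pi ν ∂Measure.pi μ := by
  rw [← (measurePreserving_arrowProdEquivProdArrow α β ι μ ν).symm.lintegral_comp hf]
  exact lintegral_prod _ (hf.comp (MeasurableEquiv.measurable _)).aemeasurable

theorem lintegral_pi_prod_prod {α β γ : Type*} [MeasurableSpace α] [MeasurableSpace β]
    [MeasurableSpace γ] {μ : ι → Measure α} [∀ i, SigmaFinite (μ i)]
    {ν : ι → Measure β} [∀ i, SigmaFinite (ν i)] {ρ : ι → Measure γ} [∀ i, SigmaFinite (ρ i)]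
    {f : (ι → α × β × γ) → ℝ≥0∞} (hf : Measurable f) :
    ∫⁻ z, f z ∂Measure.pi (fun i ↦ (μ i).prod ((ν i).prod (ρ i))) =
      ∫⁻ x, ∫⁻ y, ∫⁻ w, f (fun i ↦ (x i, y i, w i))
        ∂Measure.pi ρ ∂Measure.pi ν ∂Measure.pi μ := by
  rw [lintegral_pi_prod hf]
  refine lintegral_congr fun x ↦ ?_
  exact lintegral_pi_prod (f := fun u : ι → β × γ ↦ f fun i ↦ (x i, u i)) (by fun_prop)

end ProductMeasures

section ExponentialSeries

variable {Θ S : Type*} [MeasurableSpace Θ] [MeasurableSpace S]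
  {Q : Measure Θ} [IsFiniteMeasure Q] {τ : Measure S} [IsFiniteMeasure τ]
  {f : Θ → S → ℂ} {C : ℝ}

theorem measurable_prod_apply {ι : Type*} [Fintype ι] (hf : Measurable (Function.uncurry f)) :
    Measurable fun p : (ι → S) × Θ ↦ ∏ j, f p.2 (p.1 j) :=
  Finset.measurable_fun_prod _ fun j _ ↦
    hf.comp (f := fun p : (ι → S) × Θ ↦ (p.2, p.1 j)) (by fun_prop)

theorem integrable_prod_apply {ι : Type*} [Fintype ι]
    (hf : Measurable (Function.uncurry f)) (hC : ∀ θ s, ‖f θ s‖ ≤ C) :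
    Integrable (fun p : (ι → S) × Θ ↦ ∏ j, f p.2 (p.1 j))
      ((Measure.pi fun _ ↦ τ).prod Q) := by
  refine .of_bound (measurable_prod_apply hf).aestronglyMeasurable (∏ _j : ι, C)
    (.of_forall fun p ↦ ?_)
  rw [norm_prod]
  exact Finset.prod_le_prod (fun _ _ ↦ norm_nonneg _) fun j _ ↦ hC _ _

theorem integral_pi_integral_prod {ι : Type*} [Fintype ι]
    (hf : Measurable (Function.uncurry f)) (hC : ∀ θ s, ‖f θ s‖ ≤ C) :
    ∫ z : ι → S, ∫ θ, ∏ j, f θ (z j) ∂Q ∂Measure.pi (fun _ ↦ τ) =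
      ∫ θ, (∫ s, f θ s ∂τ) ^ Fintype.card ι ∂Q := by
  rw [integral_integral_swap (integrable_prod_apply hf hC)]
  simp_rw [integral_fintype_prod_eq_pow]

theorem hasSum_integral_cexp {φ : Θ → ℂ} (hφ : AEStronglyMeasurable φ Q)
    (hC : ∀ θ, ‖φ θ‖ ≤ C) :
    HasSum (fun k : ℕ ↦ (∫ θ, φ θ ^ k ∂Q) / k.factorial) (∫ θ, Complex.exp (φ θ) ∂Q) := by
  simp_rw [← integral_div]
  refine hasSum_integral_of_dominated_convergence (fun k _ ↦ C ^ k / k.factorial)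
    (fun k ↦ by fun_prop) (fun k ↦ .of_forall fun θ ↦ ?_)
    (.of_forall fun _ ↦ Real.summable_pow_div_factorial C) (integrable_const _)
    (.of_forall fun θ ↦ ?_)
  · rw [norm_div, norm_pow, Complex.norm_natCast]
    gcongr
    exact hC θ
  · rw [Complex.exp_eq_exp_ℂ]
    exact NormedSpace.expSeries_div_hasSum_exp _

theorem hasSum_integral_cexp_integral (hf : Measurable (Function.uncurry f))
    (hC : ∀ θ s, ‖f θ s‖ ≤ C) :
    HasSum
      (fun k : ℕ ↦
        (∫ z : Fin k → S, ∫ θ, ∏ j, f θ (z j) ∂Q ∂Measure.pi (fun _ ↦ τ)) / k.factorial)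
      (∫ θ, Complex.exp (∫ s, f θ s ∂τ) ∂Q) := by
  simp_rw [integral_pi_integral_prod hf hC, Fintype.card_fin]
  exact hasSum_integral_cexp hf.stronglyMeasurable.integral_prod_right.aestronglyMeasurable
    fun θ ↦ norm_integral_le_of_norm_le_const (.of_forall (hC θ))

end ExponentialSeries

section ExpectedPhase

variable {Θ Θ' E : Type*} [MeasurableSpace Θ] [MeasurableSpace Θ']

/-- The Fourier mode `exp(i(s a(x) + t b(x)))` of a pair of real functions `(a, b)`, as a function
of the sampling triple `(x, s, t)` of a point and two frequencies. -/
noncomputable def phase (a b : E → ℝ) (z : E × ℝ × ℝ) : ℂ :=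
  Complex.exp (Complex.I * ((z.2.1 * a z.1 + z.2.2 * b z.1 : ℝ) : ℂ))

theorem norm_phase (a b : E → ℝ) (z : E × ℝ × ℝ) : ‖phase a b z‖ = 1 := by
  rw [phase, mul_comm, Complex.norm_exp_ofReal_mul_I]

theorem phase_sub (a a' b b' : E → ℝ) (z : E × ℝ × ℝ) :
    phase (a - a') (b - b') z = phase a b z * starRingEnd ℂ (phase a' b' z) := by
  simp only [phase, ← Complex.exp_conj, ← Complex.exp_add, map_mul, Complex.conj_I,
    Complex.conj_ofReal, Pi.sub_apply]
  push_cast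
  ring_nf

theorem phase_eq_mul (a b : E → ℝ) (z : E × ℝ × ℝ) :
    phase a b z = phase a 0 z * phase 0 b z := by
  simp only [phase, ← Complex.exp_add, Pi.zero_apply]
  push_cast
  ring_nf

theorem measurable_uncurry_phase [MeasurableSpace E] {a b : Θ → E → ℝ}
    (ha : Measurable (Function.uncurry a)) (hb : Measurable (Function.uncurry b)) :
    Measurable (Function.uncurry fun θ ↦ phase (a θ) (b θ)) := by
  have measurable_a : Measurable fun p : Θ × E × ℝ × ℝ ↦ a p.1 p.2.1 :=
    ha.comp (f := fun p : Θ × E × ℝ × ℝ ↦ (p.1, p.2.1)) (by fun_prop)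
  have measurable_b : Measurable fun p : Θ × E × ℝ × ℝ ↦ b p.1 p.2.1 :=
    hb.comp (f := fun p : Θ × E × ℝ × ℝ ↦ (p.1, p.2.1)) (by fun_prop)
  exact (((measurable_snd.snd.fst.mul measurable_a).add
    (measurable_snd.snd.snd.mul measurable_b)).complex_ofReal.const_mul Complex.I).cexp

theorem integral_phase [MeasurableSpace E] {κ : Measure E} [IsFiniteMeasure κ]
    {μ ν : Measure ℝ} [IsFiniteMeasure μ] [IsFiniteMeasure ν] {a b : E → ℝ}
    (ha : Measurable a) (hb : Measurable b) :
    ∫ z, phase a b z ∂κ.prod (μ.prod ν) = ∫ x, charFun μ (a x) * charFun ν (b x) ∂κ := by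
  have integrable_phase : Integrable (phase a b) (κ.prod (μ.prod ν)) := by
    refine .of_bound (Measurable.aestronglyMeasurable ?_) 1
      (.of_forall fun z ↦ (norm_phase a b z).le)
    unfold phase
    fun_prop
  rw [integral_prod _ integrable_phase]
  refine integral_congr_ae (.of_forall fun x ↦ ?_)
  simp_rw [charFun_apply_real, ← integral_prod_mul, ← Complex.exp_add, phase]
  refine integral_congr_ae (.of_forall fun w ↦ ?_)
  push_cast
  ring_nf

variable {ι : Type*} [Fintype ι]

/-- The expectation of `∏ⱼ exp(i(sⱼ a(xⱼ) + tⱼ b(xⱼ)))` for a pair of random fields `(a, b)` on `E`: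
the characteristic function of its finite-dimensional distribution at the points `xⱼ`, with
frequencies `sⱼ` and `tⱼ`, as a function of the sampling triples `(xⱼ, sⱼ, tⱼ)`. -/
noncomputable def expectedPhase (Q : Measure Θ) (a b : Θ → E → ℝ) (z : ι → E × ℝ × ℝ) : ℂ :=
  ∫ θ, ∏ j, phase (a θ) (b θ) (z j) ∂Q

theorem expectedPhase_prod_sub (Q : Measure Θ) (Q' : Measure Θ') [SFinite Q] [SFinite Q']
    (a b : Θ → E → ℝ) (a' b' : Θ' → E → ℝ) (z : ι → E × ℝ × ℝ) :
    expectedPhase (Q.prod Q') (fun θ ↦ a θ.1 - a' θ.2) (fun θ ↦ b θ.1 - b' θ.2) z =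
      expectedPhase Q a b z * starRingEnd ℂ (expectedPhase Q' a' b' z) := by
  simp_rw [expectedPhase, ← integral_conj, ← integral_prod_mul, map_prod,
    ← Finset.prod_mul_distrib, phase_sub]

theorem expectedPhase_prod (Q : Measure Θ) (Q' : Measure Θ') [SFinite Q] [SFinite Q']
    (a : Θ → E → ℝ) (b : Θ' → E → ℝ) (z : ι → E × ℝ × ℝ) :
    expectedPhase (Q.prod Q') (fun θ ↦ a θ.1) (fun θ ↦ b θ.2) z =
      expectedPhase Q a 0 z * expectedPhase Q' 0 b z := by
  simp_rw [expectedPhase, ← integral_prod_mul, ← Finset.prod_mul_distrib, Pi.zero_apply,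
    ← phase_eq_mul]

theorem norm_expectedPhase_le (Q : Measure Θ) (a b : Θ → E → ℝ) (z : ι → E × ℝ × ℝ) :
    ‖expectedPhase Q a b z‖ ≤ Q.real .univ :=
  (norm_integral_le_integral_norm _).trans_eq (by simp [norm_phase])

variable [MeasurableSpace E] {κ : Measure E} [IsFiniteMeasure κ]
  {μ ν : Measure ℝ} [IsFiniteMeasure μ] [IsFiniteMeasure ν]
  {Q : Measure Θ} [IsFiniteMeasure Q] {a b : Θ → E → ℝ}

theorem measurable_expectedPhase
    (ha : Measurable (Function.uncurry a)) (hb : Measurable (Function.uncurry b)) :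
    Measurable (expectedPhase (ι := ι) Q a b) :=
  (measurable_prod_apply
    (measurable_uncurry_phase ha hb)).stronglyMeasurable.integral_prod_right'.measurable

theorem integrable_expectedPhase
    (ha : Measurable (Function.uncurry a)) (hb : Measurable (Function.uncurry b)) :
    Integrable (expectedPhase (ι := ι) Q a b) (Measure.pi fun _ ↦ κ.prod (μ.prod ν)) :=
  (integrable_prod_apply (measurable_uncurry_phase ha hb)
    fun _ _ ↦ (norm_phase _ _ _).le).integral_prod_left

theorem hasSum_integral_expectedPhase
    (ha : Measurable (Function.uncurry a)) (hb : Measurable (Function.uncurry b)) :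
    HasSum
      (fun k : ℕ ↦
        (∫ z : Fin k → E × ℝ × ℝ, expectedPhase Q a b z
          ∂Measure.pi (fun _ ↦ κ.prod (μ.prod ν))) / k.factorial)
      (∫ θ, Complex.exp (∫ x, charFun μ (a θ x) * charFun ν (b θ x) ∂κ) ∂Q) := by
  have integral_phase_sample (θ : Θ) := integral_phase (κ := κ) (μ := μ) (ν := ν)
    (ha.of_uncurry_left (x := θ)) (hb.of_uncurry_left (x := θ))
  simp_rw [← integral_phase_sample]
  exact hasSum_integral_cexp_integral (measurable_uncurry_phase ha hb)
    fun _ _ ↦ (norm_phase _ _ _).le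

end ExpectedPhase

section DependenceDefect

variable {Ω E ι : Type*} [MeasurableSpace Ω] [Fintype ι]

/-- The squared distance between the joint characteristic function of two random fields and the
product of the marginal ones, as a function of the sampling triples `(xⱼ, sⱼ, tⱼ)`. A marginal
characteristic function is encoded as the joint one with the other field replaced by `0`. -/
noncomputable def dependenceDefect (ℙ : Measure Ω) (X Y : Ω → E → ℝ) (z : ι → E × ℝ × ℝ) : ℝ :=
  ‖expectedPhase ℙ X Y z - expectedPhase ℙ X 0 z * expectedPhase ℙ 0 Y z‖ ^ 2

theorem dependenceDefect_of_isEmpty [IsEmpty ι] (ℙ : Measure Ω) [IsProbabilityMeasure ℙ]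
    (X Y : Ω → E → ℝ) (z : ι → E × ℝ × ℝ) : dependenceDefect ℙ X Y z = 0 := by
  simp [dependenceDefect, expectedPhase]

theorem norm_sub_sq_eq_re (J P : ℂ) :
    ‖J - P‖ ^ 2 = (J * starRingEnd ℂ J + P * starRingEnd ℂ P - 2 * (J * starRingEnd ℂ P)).re := by
  rw [Complex.sq_norm, Complex.normSq_apply]
  simp
  ring

theorem dependenceDefect_eq_re (ℙ : Measure Ω) [SFinite ℙ] (X Y : Ω → E → ℝ)
    (z : ι → E × ℝ × ℝ) :
    dependenceDefect ℙ X Y z =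
      (expectedPhase (ℙ.prod ℙ) (fun ω ↦ X ω.1 - X ω.2) (fun ω ↦ Y ω.1 - Y ω.2) z
      + expectedPhase ((ℙ.prod ℙ).prod (ℙ.prod ℙ))
          (fun ω ↦ X ω.1.1 - X ω.1.2) (fun ω ↦ Y ω.2.1 - Y ω.2.2) z
      - 2 * expectedPhase (ℙ.prod (ℙ.prod ℙ))
          (fun ω ↦ X ω.1 - X ω.2.1) (fun ω ↦ Y ω.1 - Y ω.2.2) z).re := by
  have joint_joint := expectedPhase_prod_sub ℙ ℙ X Y X Y z
  have marg_marg : expectedPhase ((ℙ.prod ℙ).prod (ℙ.prod ℙ))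
      (fun ω ↦ X ω.1.1 - X ω.1.2) (fun ω ↦ Y ω.2.1 - Y ω.2.2) z =
      (expectedPhase ℙ X 0 z * starRingEnd ℂ (expectedPhase ℙ X 0 z)) *
        (expectedPhase ℙ 0 Y z * starRingEnd ℂ (expectedPhase ℙ 0 Y z)) := by
    rw [expectedPhase_prod (ℙ.prod ℙ) (ℙ.prod ℙ) (fun ω ↦ X ω.1 - X ω.2) fun ω ↦ Y ω.1 - Y ω.2,
      ← expectedPhase_prod_sub, ← expectedPhase_prod_sub]
    simp only [Pi.zero_apply, sub_self]
    rfl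
  have joint_marg := expectedPhase_prod_sub ℙ (ℙ.prod ℙ) X Y (fun ω ↦ X ω.1) (fun ω ↦ Y ω.2) z
  rw [joint_joint, marg_marg, joint_marg, expectedPhase_prod, dependenceDefect, norm_sub_sq_eq_re,
    map_mul, mul_mul_mul_comm]

theorem measurable_uncurry_sub_comp [MeasurableSpace E] {Θ : Type*} [MeasurableSpace Θ]
    {X : Ω → E → ℝ} (hX : Measurable (Function.uncurry X)) {u v : Θ → Ω}
    (hu : Measurable u) (hv : Measurable v) :
    Measurable (Function.uncurry fun θ ↦ X (u θ) - X (v θ)) :=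
  (hX.comp (hu.prodMap measurable_id)).sub (hX.comp (hv.prodMap measurable_id))

variable [MeasurableSpace E] {κ : Measure E} [IsFiniteMeasure κ]
  {μ ν : Measure ℝ} [IsFiniteMeasure μ] [IsFiniteMeasure ν]
  {ℙ : Measure Ω} [IsFiniteMeasure ℙ] {X Y : Ω → E → ℝ}

theorem measurable_dependenceDefect
    (hX : Measurable (Function.uncurry X)) (hY : Measurable (Function.uncurry Y)) :
    Measurable (dependenceDefect (ι := ι) ℙ X Y) :=
  ((measurable_expectedPhase hX hY).sub
    ((measurable_expectedPhase hX measurable_const).mul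
      (measurable_expectedPhase measurable_const hY))).norm.pow_const 2

theorem integrable_dependenceDefect
    (hX : Measurable (Function.uncurry X)) (hY : Measurable (Function.uncurry Y)) :
    Integrable (dependenceDefect (ι := ι) ℙ X Y) (Measure.pi fun _ ↦ κ.prod (μ.prod ν)) := by
  refine .of_bound (measurable_dependenceDefect hX hY).aestronglyMeasurable
    ((ℙ.real .univ + ℙ.real .univ * ℙ.real .univ) ^ 2) (.of_forall fun z ↦ ?_)
  rw [dependenceDefect, Real.norm_of_nonneg (sq_nonneg _)]
  refine pow_le_pow_left₀ (norm_nonneg _) ((norm_sub_le _ _).trans ?_) 2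
  rw [norm_mul]
  gcongr <;> exact norm_expectedPhase_le _ _ _ _

theorem integral_dependenceDefect
    (hX : Measurable (Function.uncurry X)) (hY : Measurable (Function.uncurry Y)) :
    ∫ z : ι → E × ℝ × ℝ, dependenceDefect ℙ X Y z ∂Measure.pi (fun _ ↦ κ.prod (μ.prod ν)) =
      (∫ z : ι → E × ℝ × ℝ,
          expectedPhase (ℙ.prod ℙ) (fun ω ↦ X ω.1 - X ω.2) (fun ω ↦ Y ω.1 - Y ω.2) z
          ∂Measure.pi (fun _ ↦ κ.prod (μ.prod ν))).re
      + (∫ z : ι → E × ℝ × ℝ,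
          expectedPhase ((ℙ.prod ℙ).prod (ℙ.prod ℙ))
            (fun ω ↦ X ω.1.1 - X ω.1.2) (fun ω ↦ Y ω.2.1 - Y ω.2.2) z
          ∂Measure.pi (fun _ ↦ κ.prod (μ.prod ν))).re
      - 2 * (∫ z : ι → E × ℝ × ℝ,
          expectedPhase (ℙ.prod (ℙ.prod ℙ))
            (fun ω ↦ X ω.1 - X ω.2.1) (fun ω ↦ Y ω.1 - Y ω.2.2) z
          ∂Measure.pi (fun _ ↦ κ.prod (μ.prod ν))).re := by
  have joint := integrable_expectedPhase (ι := ι) (κ := κ) (μ := μ) (ν := ν) (Q := ℙ.prod ℙ)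
    (measurable_uncurry_sub_comp hX measurable_fst measurable_snd)
    (measurable_uncurry_sub_comp hY measurable_fst measurable_snd)
  have marg := integrable_expectedPhase (ι := ι) (κ := κ) (μ := μ) (ν := ν)
    (Q := (ℙ.prod ℙ).prod (ℙ.prod ℙ))
    (measurable_uncurry_sub_comp hX measurable_fst.fst measurable_fst.snd)
    (measurable_uncurry_sub_comp hY measurable_snd.fst measurable_snd.snd)
  have cross := integrable_expectedPhase (ι := ι) (κ := κ) (μ := μ) (ν := ν)
    (Q := ℙ.prod (ℙ.prod ℙ))
    (measurable_uncurry_sub_comp hX measurable_fst measurable_snd.fst)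
    (measurable_uncurry_sub_comp hY measurable_fst measurable_snd.snd)
  simp_rw [dependenceDefect_eq_re]
  refine (integral_re ((joint.add marg).sub (cross.const_mul 2))).trans ?_
  rw [integral_sub' (joint.add marg) (cross.const_mul 2), integral_add' joint marg,
    integral_const_mul]
  simp

theorem hasSum_integral_dependenceDefect
    (hX : Measurable (Function.uncurry X)) (hY : Measurable (Function.uncurry Y)) :
    HasSum
      (fun k : ℕ ↦
        (∫ z : Fin k → E × ℝ × ℝ, dependenceDefect ℙ X Y z
          ∂Measure.pi (fun _ ↦ κ.prod (μ.prod ν))) / k.factorial)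
      ((∫ ω : Ω × Ω, Complex.exp (∫ x, charFun μ (X ω.1 x - X ω.2 x) *
          charFun ν (Y ω.1 x - Y ω.2 x) ∂κ) ∂ℙ.prod ℙ).re
      + (∫ ω : (Ω × Ω) × Ω × Ω, Complex.exp (∫ x, charFun μ (X ω.1.1 x - X ω.1.2 x) *
          charFun ν (Y ω.2.1 x - Y ω.2.2 x) ∂κ) ∂(ℙ.prod ℙ).prod (ℙ.prod ℙ)).re
      - 2 * (∫ ω : Ω × Ω × Ω, Complex.exp (∫ x, charFun μ (X ω.1 x - X ω.2.1 x) *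
          charFun ν (Y ω.1 x - Y ω.2.2 x) ∂κ) ∂ℙ.prod (ℙ.prod ℙ)).re) := by
  have joint := Complex.hasSum_re <| hasSum_integral_expectedPhase (κ := κ) (μ := μ) (ν := ν)
    (Q := ℙ.prod ℙ)
    (measurable_uncurry_sub_comp hX measurable_fst measurable_snd)
    (measurable_uncurry_sub_comp hY measurable_fst measurable_snd)
  have marg := Complex.hasSum_re <| hasSum_integral_expectedPhase (κ := κ) (μ := μ) (ν := ν)
    (Q := (ℙ.prod ℙ).prod (ℙ.prod ℙ))
    (measurable_uncurry_sub_comp hX measurable_fst.fst measurable_fst.snd)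
    (measurable_uncurry_sub_comp hY measurable_snd.fst measurable_snd.snd)
  have cross := Complex.hasSum_re <| hasSum_integral_expectedPhase (κ := κ) (μ := μ) (ν := ν)
    (Q := ℙ.prod (ℙ.prod ℙ))
    (measurable_uncurry_sub_comp hX measurable_fst measurable_snd.fst)
    (measurable_uncurry_sub_comp hY measurable_fst measurable_snd.snd)
  simp_rw [integral_dependenceDefect hX hY, sub_div, add_div, mul_div_assoc,
    ← Complex.div_natCast_re]
  exact (joint.add marg).sub (cross.mul_left 2)

end DependenceDefect

section Weight

/-- The measure on `ℝ` with density `g` (with negative values truncated to `0`): the law of the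
frequencies in the distance covariance, whose characteristic function is `ĝ`. -/
noncomputable def weightMeasure (g : ℝ → ℝ) : Measure ℝ :=
  volume.withDensity fun s ↦ ENNReal.ofReal (g s)

theorem isFiniteMeasure_weightMeasure {g : ℝ → ℝ} (hg_int : Integrable g) :
    IsFiniteMeasure (weightMeasure g) :=
  isFiniteMeasure_withDensity_ofReal hg_int.hasFiniteIntegral

theorem charFun_weightMeasure {g : ℝ → ℝ} (hg : Measurable g) (hg_nonneg : ∀ s, 0 ≤ g s) (u : ℝ) :
    charFun (weightMeasure g) u =
      ∫ s : ℝ, Complex.exp (Complex.I * ((s * u : ℝ) : ℂ)) * (g s : ℂ) := by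
  rw [charFun_apply_real, weightMeasure, integral_withDensity_eq_integral_toReal_smul
    hg.ennreal_ofReal (.of_forall fun _ ↦ ENNReal.ofReal_lt_top)]
  refine integral_congr_ae (.of_forall fun s ↦ ?_)
  simp only [ENNReal.toReal_ofReal (hg_nonneg s), Complex.real_smul, Complex.ofReal_mul]
  ring_nf

variable {E ι : Type*} [MeasurableSpace E] [Fintype ι] {κ : Measure E} [SigmaFinite κ]

theorem pi_prod_weightMeasure {g : ℝ → ℝ} (hg : Measurable g) :
    Measure.pi (fun _ : ι ↦ κ.prod ((weightMeasure g).prod (weightMeasure g))) =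
      (Measure.pi fun _ : ι ↦ κ.prod volume).withDensity fun z ↦
        ∏ j, ENNReal.ofReal (g (z j).2.1) * ENNReal.ofReal (g (z j).2.2) := by
  have prod_eq : κ.prod ((weightMeasure g).prod (weightMeasure g)) =
      (κ.prod volume).withDensity fun z ↦
        ENNReal.ofReal (g z.2.1) * ENNReal.ofReal (g z.2.2) := by
    rw [weightMeasure, prod_withDensity hg.ennreal_ofReal hg.ennreal_ofReal,
      prod_withDensity_right (by fun_prop)]
    rfl
  have sigmaFinite_withDensity : SigmaFinite ((κ.prod volume).withDensity fun z : E × ℝ × ℝ ↦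
      ENNReal.ofReal (g z.2.1) * ENNReal.ofReal (g z.2.2)) :=
    .withDensity_of_ne_top (.of_forall fun _ ↦ by finiteness)
  simp_rw [prod_eq]
  exact pi_withDensity fun _ ↦ by fun_prop

theorem lintegral_mul_prod_weight {g : ℝ → ℝ} (hg : Measurable g) (hg_nonneg : ∀ s, 0 ≤ g s)
    {D : (ι → E × ℝ × ℝ) → ℝ} (hD : Measurable D) :
    ∫⁻ x : ι → E, (∫⁻ (s : ι → ℝ) (t : ι → ℝ),
        ENNReal.ofReal (D (fun j ↦ (x j, s j, t j)) * ∏ j, g (s j) * g (t j)))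
        ∂Measure.pi (fun _ ↦ κ) =
      ∫⁻ z, ENNReal.ofReal (D z)
        ∂Measure.pi fun _ ↦ κ.prod ((weightMeasure g).prod (weightMeasure g)) := by
  rw [pi_prod_weightMeasure hg, lintegral_withDensity_eq_lintegral_mul _ (by fun_prop)
    (by fun_prop), Measure.volume_eq_prod, lintegral_pi_prod_prod (by fun_prop), volume_pi]
  refine lintegral_congr fun x ↦ lintegral_congr fun s ↦ lintegral_congr fun t ↦ ?_
  have prod_nonneg : 0 ≤ ∏ j, g (s j) * g (t j) :=
    Finset.prod_nonneg fun j _ ↦ mul_nonneg (hg_nonneg _) (hg_nonneg _)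
  simp_rw [ENNReal.ofReal_mul' prod_nonneg, Pi.mul_apply, ← ENNReal.ofReal_mul (hg_nonneg _),
    ENNReal.ofReal_prod_of_nonneg fun j _ ↦ mul_nonneg (hg_nonneg (s j)) (hg_nonneg (t j)),
    mul_comm]

end Weight

theorem exp_one_mul_toReal_tsum {a : ℕ → ℝ} {A : ℝ} (ha : HasSum a A) (ha_nonneg : ∀ k, 0 ≤ a k)
    (ha_zero : a 0 = 0) :
    Real.exp 1 * (∑' k, ENNReal.ofReal (Real.exp (-1) * a (k + 1))).toReal = A := by
  have hasSum_shift : HasSum (fun k ↦ Real.exp (-1) * a (k + 1)) (Real.exp (-1) * A) := by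
    simpa [ha_zero] using ((hasSum_nat_add_iff' 1).mpr ha).mul_left (Real.exp (-1))
  have shift_nonneg (k : ℕ) : 0 ≤ Real.exp (-1) * a (k + 1) :=
    mul_nonneg (Real.exp_pos _).le (ha_nonneg _)
  rw [← ENNReal.ofReal_tsum_of_nonneg shift_nonneg hasSum_shift.summable,
    ENNReal.toReal_ofReal (tsum_nonneg shift_nonneg), hasSum_shift.tsum_eq, ← mul_assoc,
    ← Real.exp_add, add_neg_cancel, Real.exp_zero, one_mul]

section ContinuousProcesses

variable {Ω : Type*} [MeasurableSpace Ω] {ℙ : Measure Ω} {X Y : Ω → C(I, ℝ)}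

theorem measurable_uncurry_continuousMap [MeasurableSpace C(I, ℝ)] [BorelSpace C(I, ℝ)]
    (hX : Measurable X) : Measurable (Function.uncurry fun ω x ↦ X ω x) :=
  continuous_eval.measurable.comp (hX.prodMap measurable_id)

theorem jointCF_eq_expectedPhase {k : ℕ} (x : Fin k → I) (s t : Fin k → ℝ) :
    jointCF ℙ X Y x s t =
      expectedPhase ℙ (fun ω x ↦ X ω x) (fun ω x ↦ Y ω x) fun j ↦ (x j, s j, t j) := by
  simp_rw [jointCF, expectedPhase, phase, ← Complex.exp_sum, ← Finset.mul_sum, Complex.ofReal_sum]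

theorem margCF_eq_jointCF_left {k : ℕ} (x : Fin k → I) (s t : Fin k → ℝ) :
    margCF ℙ X x s = jointCF ℙ X 0 x s t := by
  simp [margCF, jointCF]

theorem margCF_eq_jointCF_right {k : ℕ} (x : Fin k → I) (s t : Fin k → ℝ) :
    margCF ℙ Y x t = jointCF ℙ 0 Y x s t := by
  simp [margCF, jointCF]

theorem norm_jointCF_sub_sq {k : ℕ} (x : Fin k → I) (s t : Fin k → ℝ) :
    ‖jointCF ℙ X Y x s t - margCF ℙ X x s * margCF ℙ Y x t‖ ^ 2 =
      dependenceDefect ℙ (fun ω x ↦ X ω x) (fun ω x ↦ Y ω x) fun j ↦ (x j, s j, t j) := by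
  rw [margCF_eq_jointCF_left x s t, margCF_eq_jointCF_right x s t]
  simp_rw [jointCF_eq_expectedPhase]
  rfl

variable [IsFiniteMeasure ℙ] [MeasurableSpace C(I, ℝ)] [BorelSpace C(I, ℝ)] {g : ℝ → ℝ}

theorem distCov_eq_tsum (hX : Measurable X) (hY : Measurable Y) (hg : Measurable g)
    (hg_nonneg : ∀ s, 0 ≤ g s) (hg_int : Integrable g) :
    distCov ℙ X Y g =
      ∑' k : ℕ, ENNReal.ofReal (Real.exp (-1) * (
        (∫ z : Fin (k + 1) → I × ℝ × ℝ,
          dependenceDefect ℙ (fun ω x ↦ X ω x) (fun ω x ↦ Y ω x) z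
          ∂Measure.pi fun _ ↦ volume.prod ((weightMeasure g).prod (weightMeasure g))) /
        (k + 1).factorial)) := by
  have := isFiniteMeasure_weightMeasure hg_int
  have measurable_X := measurable_uncurry_continuousMap hX
  have measurable_Y := measurable_uncurry_continuousMap hY
  refine tsum_congr fun k ↦ ?_
  simp_rw [norm_jointCF_sub_sq, volume_pi (ι := Fin (k + 1)) (α := fun _ ↦ I)]
  rw [lintegral_mul_prod_weight hg hg_nonneg
      (measurable_dependenceDefect measurable_X measurable_Y),
    ← ofReal_integral_eq_lintegral_ofReal (integrable_dependenceDefect measurable_X measurable_Y)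
      (.of_forall fun _ ↦ sq_nonneg _), ← ENNReal.ofReal_mul (by positivity), div_mul_eq_mul_div,
    mul_div_assoc]

end ContinuousProcesses

theorem distCov_representation_general
    {Ω : Type*} [MeasurableSpace Ω] (ℙ : Measure Ω) [IsProbabilityMeasure ℙ]
    [MeasurableSpace C(I, ℝ)] [BorelSpace C(I, ℝ)]
    (X Y : Ω → C(I, ℝ)) (hX : Measurable X) (hY : Measurable Y)
    (g : ℝ → ℝ) (hg : Measurable g) (hg_nonneg : ∀ s, 0 ≤ g s)
    (hg_int : Integrable g)
    (gHat : ℝ → ℂ) (hgHat : ∀ u, gHat u =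
      ∫ s : ℝ, Complex.exp (Complex.I * ((s * u : ℝ) : ℂ)) * (g s : ℂ)) :
    Real.exp 1 * (distCov ℙ X Y g).toReal =
      (∫ ω : Ω × Ω,
          Complex.exp (∫ x : I, gHat (X ω.1 x - X ω.2 x) * gHat (Y ω.1 x - Y ω.2 x))
          ∂(ℙ.prod ℙ)).re
      + (∫ ω : (Ω × Ω) × Ω × Ω,
          Complex.exp (∫ x : I, gHat (X ω.1.1 x - X ω.1.2 x) * gHat (Y ω.2.1 x - Y ω.2.2 x))
          ∂((ℙ.prod ℙ).prod (ℙ.prod ℙ))).re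
      - 2 * (∫ ω : Ω × Ω × Ω,
          Complex.exp (∫ x : I, gHat (X ω.1 x - X ω.2.1 x) * gHat (Y ω.1 x - Y ω.2.2 x))
          ∂(ℙ.prod (ℙ.prod ℙ))).re := by
  have := isFiniteMeasure_weightMeasure hg_int
  have gHat_eq : gHat = charFun (weightMeasure g) :=
    funext fun u ↦ (hgHat u).trans (charFun_weightMeasure hg hg_nonneg u).symm
  rw [distCov_eq_tsum hX hY hg hg_nonneg hg_int, gHat_eq]
  refine exp_one_mul_toReal_tsum (hasSum_integral_dependenceDefect
    (measurable_uncurry_continuousMap hX) (measurable_uncurry_continuousMap hY)) (fun k ↦ ?_) ?_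
  · exact div_nonneg (integral_nonneg fun _ ↦ sq_nonneg _) (Nat.cast_nonneg _)
  · simp only [dependenceDefect_of_isEmpty, integral_zero, zero_div]

/-- Representation of the distance covariance: with
`gHat(u) = ∫ e^{isu} g(s) ds` and independent copies realized on product spaces
(`(X',Y')` an independent copy of `(X,Y)` given by the second `Ω`-coordinate, and
`Y'', Y'''` independent copies of `Y` given by further independent coordinates),
`e · d_g(X,Y) = Re E[exp(∫₀¹ gHat(X−X')gHat(Y−Y'))] + Re E[exp(∫₀¹ gHat(X−X')gHat(Y''−Y'''))]
− 2 Re E[exp(∫₀¹ gHat(X−X')gHat(Y−Y''))]`. -/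
theorem distCov_representation
    {Ω : Type*} [MeasurableSpace Ω] (ℙ : Measure Ω) [IsProbabilityMeasure ℙ]
    [MeasurableSpace C(I, ℝ)] [BorelSpace C(I, ℝ)]
    (X Y : Ω → C(I, ℝ)) (hX : Measurable X) (hY : Measurable Y)
    (g : ℝ → ℝ) (hg : Measurable g) (hg_nonneg : ∀ s, 0 ≤ g s)
    (hg_int : (∫ s, g s) = 1)
    (gHat : ℝ → ℂ) (hgHat : ∀ u, gHat u = ∫ s : ℝ, Complex.exp (Complex.I * ((s * u : ℝ) : ℂ)) * (g s : ℂ)) :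
    Real.exp 1 * (distCov ℙ X Y g).toReal =
      (∫ ω : Ω × Ω,
          Complex.exp (∫ x : I, gHat (X ω.1 x - X ω.2 x) * gHat (Y ω.1 x - Y ω.2 x))
          ∂(ℙ.prod ℙ)).re
      + (∫ ω : (Ω × Ω) × Ω × Ω,
          Complex.exp (∫ x : I, gHat (X ω.1.1 x - X ω.1.2 x) * gHat (Y ω.2.1 x - Y ω.2.2 x))
          ∂((ℙ.prod ℙ).prod (ℙ.prod ℙ))).re
      - 2 * (∫ ω : Ω × Ω × Ω,
          Complex.exp (∫ x : I, gHat (X ω.1 x - X ω.2.1 x) * gHat (Y ω.1 x - Y ω.2.2 x))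
          ∂(ℙ.prod (ℙ.prod ℙ))).re :=
  distCov_representation_general ℙ X Y hX hY g hg hg_nonneg (integrable_of_integral_eq_one hg_int)
    gHat hgHat
end
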